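/- Let G=(V,E,I,T) be a finite inner Eulerian grapht. Then the maximal number of pairwise edge-disjoint T-paths in G equals (1/2) · Σ_{t∈T} λ_G(t, T−t), where λ_G(t, T−t) is the maximal number of pairwise edge-disjoint paths between t and T−t. -/

import Mathlib

/-! Common definitions: graphts (multigraphs with terminals), walks, paths, cycles,
edge cuts, inner Eulerian graphts, path systems, linkages, Erdős–Menger cuts,
restriction (edge deletion) and contraction. -/

universe u v

/-- A *grapht*: a multigraph (no loops, parallel edges allowed) given by an incidence
function `I : E → Sym2 V`, together with a set `T` of at least two terminal vertices. -/
structure Grapht (V : Type u) (E : Type v) where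
  I : E → Sym2 V
  loopless : ∀ e : E, ¬ (I e).IsDiag
  T : Set V
  T_nontrivial : T.Nontrivial

namespace Grapht

variable {V : Type u} {E : Type v}

/-- `G.IsWalk vs es` holds when `vs` is the vertex sequence and `es` the edge sequence
of a walk in `G`. -/
inductive IsWalk (G : Grapht V E) : List V → List E → Prop
  | nil (v : V) : IsWalk G [v] []
  | cons {u w : V} {vs : List V} {e : E} {es : List E} :
      G.I e = s(u, w) → IsWalk G (w :: vs) es → IsWalk G (u :: w :: vs) (e :: es)

/-- A finite path in the grapht `G` (no repeated vertices), with endpoints `first`, `last`. -/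
structure Path (G : Grapht V E) where
  first : V
  last : V
  verts : List V
  edges : List E
  isWalk : G.IsWalk verts edges
  nodup : verts.Nodup
  head_eq : verts.head? = some first
  getLast_eq : verts.getLast? = some last

/-- A finite cycle in the grapht `G`. -/
structure Cycle (G : Grapht V E) where
  verts : List V
  edges : List E
  isWalk : G.IsWalk verts edges
  closed : verts.head? = verts.getLast?
  nontrivial : edges ≠ []
  edges_nodup : edges.Nodup
  tail_nodup : verts.tail.Nodup

variable {G : Grapht V E}

/-- The internal (inner) vertices of a path. -/
def Path.inner (P : G.Path) : List V := (P.verts.drop 1).dropLast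

/-- The edge set of a path. -/
def Path.edgeSet (P : G.Path) : Set E := {e | e ∈ P.edges}

/-- The edge set of a cycle. -/
def Cycle.edgeSet (C : G.Cycle) : Set E := {e | e ∈ C.edges}

variable (G)

/-- `δ_G(X)`: the set of edges with exactly one endpoint in `X`. -/
def edgeCut (X : Set V) : Set E :=
  {e | ∃ u w, G.I e = s(u, w) ∧ u ∈ X ∧ w ∉ X}

/-- A grapht is *inner Eulerian* if there is no `X ⊆ V ∖ T` whose cut `δ(X)` is a
finite set of odd size. -/
def InnerEulerian : Prop :=
  ∀ X : Set V, Disjoint X G.T → ¬ ((G.edgeCut X).Finite ∧ Odd (G.edgeCut X).ncard)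

/-- An `AB`-path: a path with first vertex in `A`, last vertex in `B` and no internal
vertex in `A ∪ B`. -/
def IsABPath (A B : Set V) (P : G.Path) : Prop :=
  P.first ∈ A ∧ P.last ∈ B ∧ ∀ v ∈ P.inner, v ∉ A ∪ B

/-- A `T`-path: a path between two distinct terminal vertices without internal
terminal vertices. -/
def IsTPath (P : G.Path) : Prop :=
  P.first ∈ G.T ∧ P.last ∈ G.T ∧ P.first ≠ P.last ∧ ∀ v ∈ P.inner, v ∉ G.T

/-- A system of pairwise edge-disjoint paths. -/
def EdgeDisjoint (Ps : Set G.Path) : Prop :=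
  Ps.Pairwise fun P Q => ∀ e, e ∈ P.edges → e ∉ Q.edges

/-- A system of pairwise edge-disjoint `T`-paths. -/
def IsTPathSystem (Ps : Set G.Path) : Prop :=
  G.EdgeDisjoint Ps ∧ ∀ P ∈ Ps, G.IsTPath P

/-- The set of edges used by a path system. -/
def sysEdges (Ps : Set G.Path) : Set E := ⋃ P ∈ Ps, P.edgeSet

/-- `C` is *orthogonal* to the path system `Ps`: `C` consists of exactly one edge from
each path of `Ps`. -/
def Orthogonal (C : Set E) (Ps : Set G.Path) : Prop :=
  (∀ P ∈ Ps, ∃! e, e ∈ C ∧ e ∈ P.edges) ∧ ∀ e ∈ C, ∃ P ∈ Ps, e ∈ P.edges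

/-- `C` separates `A` and `B`: every `AB`-path meets `C` (i.e. `G − C` has no `AB`-path). -/
def Separates (C : Set E) (A B : Set V) : Prop :=
  ∀ P : G.Path, G.IsABPath A B P → ∃ e ∈ C, e ∈ P.edges

/-- An `AB`-cut. -/
def IsABCut (A B : Set V) (C : Set E) : Prop :=
  ∀ P : G.Path, G.IsABPath A B P → ∃ e ∈ C, e ∈ P.edges

/-- An Erdős–Menger `AB`-cut: an `AB`-cut orthogonal to some system of pairwise
edge-disjoint `AB`-paths. -/
def IsEMABCut (A B : Set V) (C : Set E) : Prop :=
  G.IsABCut A B C ∧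
    ∃ Ps : Set G.Path, G.EdgeDisjoint Ps ∧ (∀ P ∈ Ps, G.IsABPath A B P) ∧ G.Orthogonal C Ps

/-- The order `⊴` on (Erdős–Menger) `AB`-cuts: on every `AB`-path the first edge of `C`
comes no later than the first edge of `C'`. -/
def ABCutLE (A B : Set V) (C C' : Set E) : Prop :=
  ∀ P : G.Path, G.IsABPath A B P →
    ∀ i : Fin P.edges.length, P.edges.get i ∈ C' →
      ∃ j : Fin P.edges.length, (j : ℕ) ≤ (i : ℕ) ∧ P.edges.get j ∈ C

/-- `C` is the `⊴`-largest Erdős–Menger `AB`-cut. -/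
def IsLargestEMABCut (A B : Set V) (C : Set E) : Prop :=
  G.IsEMABCut A B C ∧ ∀ C', G.IsEMABCut A B C' → G.ABCutLE A B C' C

/-- A system `Ps` of pairwise edge-disjoint `T`-paths *links* the terminal `t`:
it covers `δ(t)`. -/
def Links (Ps : Set G.Path) (t : V) : Prop :=
  G.IsTPathSystem Ps ∧ ∀ e ∈ G.edgeCut {t}, ∃ P ∈ Ps, e ∈ P.edges

/-- The terminal `t` is linked. -/
def Linked (t : V) : Prop := ∃ Ps : Set G.Path, G.Links Ps t

/-- The linkability condition: every terminal is linked. -/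
def LinkabilityCondition : Prop := ∀ t ∈ G.T, G.Linked t

/-- A perfect linkage: a system of pairwise edge-disjoint `T`-paths linking every
terminal. -/
def IsPerfectLinkage (Ps : Set G.Path) : Prop :=
  G.IsTPathSystem Ps ∧ ∀ t ∈ G.T, ∀ e ∈ G.edgeCut {t}, ∃ P ∈ Ps, e ∈ P.edges

/-- In the two-terminal setting: a system of pairwise edge-disjoint `st`-paths
covering `δ(s)` (a linkage of `s`). -/
def IsStLinkage (s t : V) (Ps : Set G.Path) : Prop :=
  G.EdgeDisjoint Ps ∧ (∀ P ∈ Ps, G.IsABPath {s} {t} P) ∧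
    ∀ e ∈ G.edgeCut {s}, ∃ P ∈ Ps, e ∈ P.edges

/-- `s` is linked (two-terminal setting). -/
def StLinked (s t : V) : Prop := ∃ Ps : Set G.Path, G.IsStLinkage s t Ps

/-- `λ_G(A,B)`: the maximal number of pairwise edge-disjoint `AB`-paths. -/
noncomputable def lambda (A B : Set V) : ℕ :=
  sSup {n : ℕ | ∃ Ps : Set G.Path, G.EdgeDisjoint Ps ∧ (∀ P ∈ Ps, G.IsABPath A B P) ∧
    Ps.Finite ∧ Ps.ncard = n}

/-- The grapht obtained by deleting all edges outside `F`. -/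
def restrict (F : Set E) : Grapht V F where
  I e := G.I e.1
  loopless e := G.loopless e.1
  T := G.T
  T_nontrivial := G.T_nontrivial

/-- The map sending every vertex of a contracted set `X t` (`t ∈ T`) to `t`. -/
noncomputable def contractMap (X : V → Set V) : V → V := fun v =>
  letI := Classical.dec (∃ u ∈ G.T, v ∈ X u)
  if h : ∃ u ∈ G.T, v ∈ X u then h.choose else v

/-- The contraction `G/ℱ` of the family `ℱ = {X t : t ∈ T}`: each `X t` is contracted
to `t` and the arising loops are deleted. -/
noncomputable def contract (X : V → Set V) :
    Grapht V {e : E // ¬ ((G.I e).map (G.contractMap X)).IsDiag} where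
  I e := (G.I e.1).map (G.contractMap X)
  loopless e := e.2
  T := G.T
  T_nontrivial := G.T_nontrivial

end Grapht

/-! For a terminal `t` let `c t` be the least size of a cut separating `t` from `T - t`. It bounds
`λ(t, T - t)`, so it suffices to find edge-disjoint `T`-paths numbering at least half the sum of
the `c t`. An edge between two terminals is such a path and can be removed. For an edge `vt` with
`t ∈ T` and `v ∉ T`, Lovász's splitting off replaces `vt` and a suitable edge `vw` by one edge `tw`.
A cut loses at most two edges, and by the inner Eulerian condition every cut that separates `t` from
`T - t` and is not tight has at least two edges to spare; so only a tight cut with `v` on one side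
and `t`, `w` on the other is an obstacle. By submodularity the tight sets containing `v` but not `t`
are closed under intersection, so the least one contains a neighbour `w` of `v` that lies in all of
them. Undoing the splittings keeps the paths edge-disjoint. -/

namespace Grapht

variable {V : Type u} {E : Type v}

section CutSize

variable {S : Finset E} {I : E → Sym2 V} {X Y : Set V}

open scoped Classical in
/-- The indicator of an edge with endpoints `z` lying in the cut `δ(X)`. It is integer valued so
that cut sizes can be subtracted; `z` may be a loop, because splitting off can create loops. -/
noncomputable def crossing (X : Set V) (z : Sym2 V) : ℤ :=
  if ∃ a b, z = s(a, b) ∧ a ∈ X ∧ b ∉ X then 1 else 0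

open scoped Classical in
theorem crossing_mk (X : Set V) (a b : V) :
    crossing X s(a, b) = if a ∈ X ↔ b ∈ X then 0 else 1 := by
  have h : (∃ a' b', s(a, b) = s(a', b') ∧ a' ∈ X ∧ b' ∉ X) ↔ ¬(a ∈ X ↔ b ∈ X) := by
    simp only [Sym2.eq_iff]
    grind
  simp only [crossing, h, ite_not]

theorem crossing_nonneg (X : Set V) (z : Sym2 V) : 0 ≤ crossing X z := by
  unfold crossing
  split_ifs <;> simp

theorem crossing_compl (X : Set V) (z : Sym2 V) : crossing Xᶜ z = crossing X z := by
  induction z using Sym2.ind with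
  | _ a b =>
    simp only [crossing_mk]
    grind

theorem crossing_inter_add_crossing_union_le (X Y : Set V) (z : Sym2 V) :
    crossing (X ∩ Y) z + crossing (X ∪ Y) z ≤ crossing X z + crossing Y z := by
  induction z using Sym2.ind with
  | _ a b =>
    simp only [crossing_mk]
    grind

theorem sum_crossing_singleton_le_two (U : Finset V) (z : Sym2 V) :
    ∑ r ∈ U, crossing {r} z ≤ 2 := by
  classical
  induction z using Sym2.ind with
  | _ a b =>
    calc ∑ r ∈ U, crossing {r} s(a, b)
        ≤ ∑ r ∈ U, ((if r = a then 1 else 0) + if r = b then 1 else 0) :=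
          Finset.sum_le_sum fun r _ => by
            simp only [crossing_mk, Set.mem_singleton_iff]
            grind
      _ ≤ 2 := by
          rw [Finset.sum_add_distrib, Finset.sum_ite_eq', Finset.sum_ite_eq']
          grind

/-- The size of the cut `δ(X)` in the multigraph with edge set `S` and incidence function `I`. The
multigraph is not bundled because splitting off changes `S` and `I` step by step. -/
noncomputable def cutSize (S : Finset E) (I : E → Sym2 V) (X : Set V) : ℤ :=
  ∑ e ∈ S, crossing X (I e)

theorem cutSize_compl (S : Finset E) (I : E → Sym2 V) (X : Set V) :
    cutSize S I Xᶜ = cutSize S I X :=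
  Finset.sum_congr rfl fun _ _ => crossing_compl _ _

theorem cutSize_inter_add_cutSize_union_le (S : Finset E) (I : E → Sym2 V) (X Y : Set V) :
    cutSize S I (X ∩ Y) + cutSize S I (X ∪ Y) ≤ cutSize S I X + cutSize S I Y := by
  simp only [cutSize, ← Finset.sum_add_distrib]
  exact Finset.sum_le_sum fun e _ => crossing_inter_add_crossing_union_le X Y (I e)

theorem cutSize_inter_add_cutSize_union_lt {e : E} (he : e ∈ S) {x y : V} (hI : I e = s(x, y))
    (hx : x ∈ X \ Y) (hy : y ∈ Y \ X) :
    cutSize S I (X ∩ Y) + cutSize S I (X ∪ Y) < cutSize S I X + cutSize S I Y := by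
  simp only [cutSize, ← Finset.sum_add_distrib]
  refine Finset.sum_lt_sum (fun e _ => crossing_inter_add_crossing_union_le X Y (I e)) ⟨e, he, ?_⟩
  simp only [hI, crossing_mk]
  grind

theorem cutSize_sdiff_add_cutSize_sdiff_lt {e : E} (he : e ∈ S) {x y : V} (hI : I e = s(x, y))
    (hx : x ∈ X ∩ Y) (hy : y ∉ X ∪ Y) :
    cutSize S I (X \ Y) + cutSize S I (Y \ X) < cutSize S I X + cutSize S I Y := by
  have hcompl : Y \ X = (X ∪ Yᶜ)ᶜ := by
    rw [Set.compl_union, compl_compl, Set.inter_comm, Set.sdiff_eq]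
  rw [hcompl, cutSize_compl, Set.sdiff_eq, ← cutSize_compl S I Y]
  exact cutSize_inter_add_cutSize_union_lt he hI (by grind) (by grind)

theorem cutSize_union_of_no_edge (hXY : Disjoint X Y)
    (h : ∀ e ∈ S, ∀ x ∈ X, ∀ y ∈ Y, I e ≠ s(x, y)) :
    cutSize S I (X ∪ Y) = cutSize S I X + cutSize S I Y := by
  simp only [cutSize, ← Finset.sum_add_distrib]
  refine Finset.sum_congr rfl fun e he => ?_
  have hab := h e he
  revert hab
  induction I e using Sym2.ind with
  | _ a b =>
    intro hab
    simp only [crossing_mk]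
    grind

theorem exists_ne_edge_of_even_cutSize_singleton {v t : V} (h : Even (cutSize S I {v})) {e₁ : E}
    (he₁ : e₁ ∈ S) (hI : I e₁ = s(v, t)) (hvt : v ≠ t) :
    ∃ e₂ ∈ S, e₂ ≠ e₁ ∧ ∃ w, I e₂ = s(v, w) := by
  by_contra! hno
  have hdeg : cutSize S I {v} = 1 := by
    rw [cutSize, Finset.sum_eq_single_of_mem e₁ he₁]
    · simp [hI, crossing_mk, hvt.symm]
    · intro e he hne
      refine if_neg ?_
      rintro ⟨_, b, hIe, rfl, -⟩
      exact hno e he hne b hIe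
  exact absurd h (by simp [hdeg])

theorem cutSize_singleton_eq_zero {t : V} (h : ∀ e ∈ S, ∀ b, b ≠ t → I e ≠ s(b, t)) :
    cutSize S I {t} = 0 := by
  refine Finset.sum_eq_zero fun e he => if_neg ?_
  rintro ⟨_, b, hI, rfl, hb⟩
  exact h e he b hb (hI.trans Sym2.eq_swap)

theorem even_cutSize_add_cutSize_add_cutSize_symmDiff (S : Finset E) (I : E → Sym2 V)
    (X Y : Set V) :
    Even (cutSize S I X + cutSize S I Y + cutSize S I (symmDiff X Y)) := by
  simp only [cutSize, ← Finset.sum_add_distrib]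
  refine Finset.sum_induction _ _ (fun _ _ => Even.add) Even.zero fun e _ => ?_
  induction I e using Sym2.ind with
  | _ a b =>
    simp only [crossing_mk, Int.even_iff]
    grind

theorem cutSize_erase [DecidableEq E] {e : E} (he : e ∈ S) (I : E → Sym2 V) (X : Set V) :
    cutSize (S.erase e) I X = cutSize S I X - crossing X (I e) :=
  Finset.sum_erase_eq_sub he

theorem cutSize_update [DecidableEq E] {e : E} (he : e ∈ S) (I : E → Sym2 V) (z : Sym2 V)
    (X : Set V) :
    cutSize S (Function.update I e z) X = cutSize S I X - crossing X (I e) + crossing X z := by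
  have hcomp : ∀ i, crossing X (Function.update I e z i) =
      Function.update (fun i => crossing X (I i)) e (crossing X z) i :=
    fun i => Function.apply_update (fun _ => crossing X) I e z i
  simp only [cutSize, hcomp]
  rw [Finset.sum_update_of_mem he, Finset.sdiff_singleton_eq_erase, Finset.sum_erase_eq_sub he]
  ring

theorem cutSize_split [DecidableEq E] (X : Set V) [DecidablePred (· ∈ X)] {e₁ e₂ : E}
    (he₁ : e₁ ∈ S) (he₂ : e₂ ∈ S) (hne : e₁ ≠ e₂) {v t w : V} (hI₁ : I e₁ = s(v, t))
    (hI₂ : I e₂ = s(v, w)) :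
    cutSize (S.erase e₂) (Function.update I e₁ s(t, w)) X =
      cutSize S I X - if (v ∈ X ↔ t ∉ X) ∧ (v ∈ X ↔ w ∉ X) then 2 else 0 := by
  rw [cutSize_update (Finset.mem_erase.2 ⟨hne, he₁⟩), cutSize_erase he₂, hI₁, hI₂]
  simp only [crossing_mk]
  grind

theorem cutSize_univ_eq_ncard_edgeCut [Fintype E] (G : Grapht V E) (X : Set V) :
    cutSize Finset.univ G.I X = ((G.edgeCut X).ncard : ℤ) := by
  classical
  unfold cutSize crossing edgeCut
  rw [Finset.sum_boole, Set.ncard_eq_toFinset_card', Set.toFinset_ofPred]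

end CutSize

section Demand

variable {S : Finset E} {I : E → Sym2 V} {T X Y : Set V}

/-- `X` contains the terminal `t` and no other terminal, i.e. `X ∩ T = {t}`. -/
def Isolates (T : Set V) (t : V) (X : Set V) : Prop :=
  t ∈ T ∧ ∀ r ∈ T, r ∈ X ↔ r = t

/-- The cut `δ(X) = δ(Xᶜ)` separates the terminal `t` from all other terminals. -/
def Severs (T : Set V) (t : V) (X : Set V) : Prop :=
  Isolates T t X ∨ Isolates T t Xᶜ

/-- The vector `c` is a system of demands that the multigraph `(S, I)` can be expected to satisfy:
no cut severing a terminal `t` has fewer than `c t` edges, and all degrees have the parity that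
the Lovász–Cherkassky theorem needs. -/
structure IsDemand (T : Set V) (S : Finset E) (I : E → Sym2 V) (c : V → ℤ) : Prop where
  le_cutSize {t : V} {X : Set V} : Severs T t X → c t ≤ cutSize S I X
  even_sub {t : V} {X : Set V} : Severs T t X → Even (cutSize S I X - c t)
  even_degree {v : V} : v ∉ T → Even (cutSize S I {v})

/-- The cut `δ(X)` severs some terminal `s` and has exactly `c s` edges. -/
def IsTight (T : Set V) (S : Finset E) (I : E → Sym2 V) (c : V → ℤ) (X : Set V) : Prop :=
  ∃ s, Severs T s X ∧ cutSize S I X = c s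

variable {c : V → ℤ} {s t v w : V}

theorem isolates_singleton (ht : t ∈ T) : Isolates T t {t} :=
  ⟨ht, fun _ _ => Set.mem_singleton_iff⟩

theorem Severs.compl (h : Severs T t X) : Severs T t Xᶜ := by
  rw [Severs, compl_compl]
  exact h.symm

theorem Severs.exists_isolates (h : Severs T t X) :
    ∃ Y, Isolates T t Y ∧ cutSize S I Y = cutSize S I X :=
  h.elim (fun hX => ⟨X, hX, rfl⟩) fun hX => ⟨Xᶜ, hX, cutSize_compl S I X⟩

theorem Severs.sdiff_singleton (h : Severs T t X) (hv : v ∉ T) : Severs T t (X \ {v}) := by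
  rcases h with h | h
  · exact .inl ⟨h.1, by grind [Isolates]⟩
  · exact .inr ⟨h.1, by grind [Isolates]⟩

theorem Severs.crossing_eq (h : Severs T t X) {x y : V} (hx : x ∈ T) (hy : y ∈ T) :
    crossing X s(x, y) = crossing {t} s(x, y) := by
  simp only [crossing_mk]
  grind [Severs, Isolates]

theorem IsTight.compl (h : IsTight T S I c X) : IsTight T S I c Xᶜ := by
  obtain ⟨s, hs, hcut⟩ := h
  exact ⟨s, hs.compl, (cutSize_compl S I X).trans hcut⟩

namespace IsDemand

theorem add_lt_cutSize_add_cutSize (h : IsDemand T S I c) {e : E} (he : e ∈ S)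
    (hI : I e = s(v, w)) (hX : Isolates T s X) (hY : Isolates T t Y) (hst : s ≠ t)
    (hv : v ∈ X ∩ Y) (hw : w ∉ X ∪ Y) : c s + c t < cutSize S I X + cutSize S I Y := by
  have hXY : Isolates T s (X \ Y) := ⟨hX.1, by grind [Isolates]⟩
  have hYX : Isolates T t (Y \ X) := ⟨hY.1, by grind [Isolates]⟩
  linarith [h.le_cutSize (.inl hXY), h.le_cutSize (.inl hYX),
    cutSize_sdiff_add_cutSize_sdiff_lt he hI hv hw]

/-- Uncrossing; two sets around `v` that isolate different terminals are excluded by the edge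
`vt`, whose ends lie inside both and outside both. -/
theorem isTight_inter (h : IsDemand T S I c) {e : E} (he : e ∈ S) (hI : I e = s(v, t))
    (ht : t ∈ T) (hX : IsTight T S I c X) (hY : IsTight T S I c Y) (hv : v ∈ X ∩ Y)
    (htXY : t ∉ X ∪ Y) : IsTight T S I c (X ∩ Y) := by
  obtain ⟨s, hs, hcs⟩ := hX
  obtain ⟨r, hr, hcr⟩ := hY
  suffices hsev : Severs T s (X ∩ Y) ∧ Severs T r (X ∪ Y) ∨
      Severs T r (X ∩ Y) ∧ Severs T s (X ∪ Y) by
    have hsub := cutSize_inter_add_cutSize_union_le S I X Y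
    rcases hsev with ⟨hinter, hunion⟩ | ⟨hinter, hunion⟩
    all_goals
      have hle := h.le_cutSize hinter
      have hle' := h.le_cutSize hunion
      exact ⟨_, hinter, by omega⟩
  rcases hs with hs | hs <;> rcases hr with hr | hr
  · obtain rfl : s = r := by
      by_contra hsr
      linarith [h.add_lt_cutSize_add_cutSize he hI hs hr hsr hv htXY]
    exact .inl ⟨.inl ⟨hs.1, by grind [Isolates]⟩, .inl ⟨hs.1, by grind [Isolates]⟩⟩
  · exact .inl ⟨.inl ⟨hs.1, by grind [Isolates]⟩, .inr ⟨hr.1, by grind [Isolates]⟩⟩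
  · exact .inr ⟨.inl ⟨hr.1, by grind [Isolates]⟩, .inr ⟨hs.1, by grind [Isolates]⟩⟩
  · exact .inl ⟨.inr ⟨hs.1, by grind [Isolates]⟩, .inr ⟨hr.1, by grind [Isolates]⟩⟩

theorem exists_edge_of_isTight (h : IsDemand T S I c) (hX : IsTight T S I c X) (hvX : v ∈ X)
    (hv : v ∉ T) (hpos : 0 < cutSize S I {v}) : ∃ e ∈ S, ∃ w ∈ X, I e = s(v, w) := by
  by_contra! hno
  obtain ⟨s, hs, hcut⟩ := hX
  have hsplit : cutSize S I X = cutSize S I (X \ {v}) + cutSize S I {v} := by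
    rw [← cutSize_union_of_no_edge Set.disjoint_sdiff_left,
      Set.sdiff_union_of_subset (Set.singleton_subset_iff.2 hvX)]
    rintro e he x hx _ rfl hI
    exact hno e he x hx.1 (hI.trans Sym2.eq_swap)
  linarith [h.le_cutSize (hs.sdiff_singleton hv)]

/-- The tight sets containing `v` but not `t` are closed under intersection, and each of them
contains a neighbour of `v`. Hence one neighbour `w` lies in all of them. -/
theorem exists_splittable (h : IsDemand T S I c) (hv : v ∉ T) (ht : t ∈ T) {e₁ : E}
    (he₁ : e₁ ∈ S) (hI : I e₁ = s(v, t)) :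
    ∃ e₂ ∈ S, e₂ ≠ e₁ ∧ ∃ w, I e₂ = s(v, w) ∧
      ∀ X, IsTight T S I c X → v ∈ X → t ∉ X → w ∈ X := by
  classical
  have hvt : v ≠ t := fun hvt => hv (hvt ▸ ht)
  by_cases hex : ∃ X, IsTight T S I c X ∧ v ∈ X ∧ t ∉ X
  · obtain ⟨D, ⟨hD, hvD, htD⟩, hmin⟩ := exists_minimalFor_of_wellFoundedLT _
      (fun X : Set V => {e ∈ S | ∃ w ∈ X, I e = s(v, w)}) hex
    have hpos : 0 < cutSize S I {v} :=
      Finset.sum_pos' (fun e _ => crossing_nonneg _ _)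
        ⟨e₁, he₁, by simp [hI, crossing_mk, hvt.symm]⟩
    obtain ⟨e₂, he₂, w, hwD, hI₂⟩ := h.exists_edge_of_isTight hD hvD hv hpos
    refine ⟨e₂, he₂, ?_, w, hI₂, fun X hX hvX htX => ?_⟩
    · rintro rfl
      exact htD (Sym2.congr_right.1 (hI₂.symm.trans hI) ▸ hwD)
    · have hDX := h.isTight_inter he₁ hI ht hD hX ⟨hvD, hvX⟩ (not_or.2 ⟨htD, htX⟩)
      have hsub := hmin ⟨hDX, ⟨hvD, hvX⟩, fun h => htD h.1⟩
        (Finset.monotone_filter_right S fun e _ ⟨w, hw, hIe⟩ => ⟨w, hw.1, hIe⟩)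
      obtain ⟨w', hw', hI'⟩ := (Finset.mem_filter.1
        (hsub (Finset.mem_filter.2 ⟨he₂, w, hwD, hI₂⟩))).2
      exact Sym2.congr_right.1 (hI₂.symm.trans hI') ▸ hw'.2
  · obtain ⟨e₂, he₂, hne, w, hI₂⟩ :=
      exists_ne_edge_of_even_cutSize_singleton (h.even_degree hv) he₁ hI hvt
    exact ⟨e₂, he₂, hne, w, hI₂, fun X hX hvX htX => (hex ⟨X, hX, hvX, htX⟩).elim⟩

theorem split [DecidableEq E] (h : IsDemand T S I c) {e₁ e₂ : E} (he₁ : e₁ ∈ S) (he₂ : e₂ ∈ S)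
    (hne : e₁ ≠ e₂) (hI₁ : I e₁ = s(v, t)) (hI₂ : I e₂ = s(v, w))
    (hw : ∀ X, IsTight T S I c X → v ∈ X → t ∉ X → w ∈ X) :
    IsDemand T (S.erase e₂) (Function.update I e₁ s(t, w)) c where
  le_cutSize {r X} hX := by
    classical
    have hle := h.le_cutSize hX
    obtain ⟨m, hm⟩ := h.even_sub hX
    have hnot : (v ∈ X ↔ t ∉ X) ∧ (v ∈ X ↔ w ∉ X) → cutSize S I X ≠ c r := fun hsep htight => by
      have hXt : IsTight T S I c X := ⟨r, hX, htight⟩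
      have hin := hw X hXt
      have hout := hw Xᶜ hXt.compl
      grind
    rw [cutSize_split X he₁ he₂ hne hI₁ hI₂]
    split_ifs with hsep
    · have hlt := hnot hsep
      omega
    · omega
  even_sub hX := by
    classical
    have heven := h.even_sub hX
    rw [cutSize_split _ he₁ he₂ hne hI₁ hI₂, Int.even_iff]
    rw [Int.even_iff] at heven
    split_ifs <;> omega
  even_degree hx := by
    classical
    have heven := h.even_degree hx
    rw [cutSize_split _ he₁ he₂ hne hI₁ hI₂, Int.even_iff]
    rw [Int.even_iff] at heven
    split_ifs <;> omega

theorem erase [DecidableEq E] (h : IsDemand T S I c) {e : E} (he : e ∈ S) (hs : s ∈ T)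
    (ht : t ∈ T) (hI : I e = s(s, t)) :
    IsDemand T (S.erase e) I fun r => c r - crossing {r} (I e) where
  le_cutSize hX := by
    rw [cutSize_erase he, hI, hX.crossing_eq hs ht]
    exact sub_le_sub_right (h.le_cutSize hX) _
  even_sub hX := by
    rw [cutSize_erase he, hI, hX.crossing_eq hs ht, sub_sub_sub_cancel_right]
    exact h.even_sub hX
  even_degree {v} hv := by
    have hcross : crossing {v} (I e) = 0 := by
      rw [hI, crossing_mk]
      grind
    rw [cutSize_erase he, hcross, sub_zero]
    exact h.even_degree hv

end IsDemand

end Demand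

section Packing

variable {S : Finset E} {I : E → Sym2 V} {T : Set V} {c : V → ℤ} {κ : E → ℕ} {k : ℕ} {v t w : V}

/-- `a` and `b` are connected by edges in `F`. -/
def Joined (I : E → Sym2 V) (F : Set E) : V → V → Prop :=
  Relation.ReflTransGen fun a b => ∃ e ∈ F, I e = s(a, b)

theorem Joined.of_edge {F : Set E} {e : E} (he : e ∈ F) {a b : V} (hI : I e = s(a, b)) :
    Joined I F a b :=
  .single ⟨e, he, hI⟩

theorem Joined.of_forall_edge {F F' : Set E} {I' : E → Sym2 V} {a b : V}
    (hab : Joined I F a b) (h : ∀ e ∈ F, ∀ a b, I e = s(a, b) → Joined I' F' a b) :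
    Joined I' F' a b :=
  Relation.reflTransGen_closed (fun _ _ ⟨e, he, hI⟩ => h e he _ _ hI) _ _ hab

theorem Joined.symm {F : Set E} {a b : V} (h : Joined I F a b) : Joined I F b a :=
  Relation.ReflTransGen.mono (fun _ _ ⟨e, he, hI⟩ => ⟨e, he, hI.trans Sym2.eq_swap⟩) _ _
    (Relation.ReflTransGen.swap _ _ h)

/-- A packing of `k` edge-disjoint connections between distinct terminals. It is encoded as a
colouring `κ` of the edges whose colour classes `0, …, k - 1` each join two terminals; edges of
other colours are unused. -/
def IsPacking (T : Set V) (S : Finset E) (I : E → Sym2 V) (κ : E → ℕ) (k : ℕ) : Prop :=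
  ∀ i < k, ∃ s ∈ T, ∃ t ∈ T, s ≠ t ∧ Joined I {e | e ∈ S ∧ κ e = i} s t

theorem IsPacking.of_erase [DecidableEq E] {e : E} (h : IsPacking T (S.erase e) I κ k)
    (he : e ∈ S) {s : V} (hs : s ∈ T) (ht : t ∈ T) (hst : s ≠ t) (hI : I e = s(s, t)) :
    IsPacking T S I (Function.update κ e k) (k + 1) := by
  intro i hi
  rcases Nat.lt_succ_iff_lt_or_eq.1 hi with hi | rfl
  · obtain ⟨a, ha, b, hb, hab, hjoin⟩ := h i hi
    refine ⟨a, ha, b, hb, hab, hjoin.of_forall_edge fun e' ⟨he', hκ⟩ _ _ hI' => ?_⟩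
    obtain ⟨hne, he'⟩ := Finset.mem_erase.1 he'
    exact .of_edge (.intro he' (by rw [Function.update_of_ne hne, hκ])) hI'
  · exact ⟨s, hs, t, ht, hst, .of_edge (.intro he (Function.update_self ..)) hI⟩

/-- Both halves of a split edge get its colour. -/
theorem IsPacking.of_split [DecidableEq E] {e₁ e₂ : E}
    (h : IsPacking T (S.erase e₂) (Function.update I e₁ s(t, w)) κ k) (he₂ : e₂ ∈ S)
    (hne : e₁ ≠ e₂) (hI₁ : I e₁ = s(v, t)) (hI₂ : I e₂ = s(v, w)) :
    IsPacking T S I (Function.update κ e₂ (κ e₁)) k := by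
  intro i hi
  obtain ⟨a, ha, b, hb, hab, hjoin⟩ := h i hi
  refine ⟨a, ha, b, hb, hab, hjoin.of_forall_edge fun e ⟨he, hκ⟩ x y hI => ?_⟩
  obtain ⟨he₂', heS⟩ := Finset.mem_erase.1 he
  have hκe : Function.update κ e₂ (κ e₁) e = i := by rw [Function.update_of_ne he₂', hκ]
  rcases eq_or_ne e e₁ with rfl | he₁
  · have htw : Joined I {e' | e' ∈ S ∧ Function.update κ e₂ (κ e) e' = i} t w :=
      (Joined.of_edge (.intro heS hκe) hI₁).symm.trans
        (Joined.of_edge (.intro he₂ (by rw [Function.update_self, hκ])) hI₂)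
    rw [Function.update_self] at hI
    rcases Sym2.eq_iff.1 hI with ⟨rfl, rfl⟩ | ⟨rfl, rfl⟩
    · exact htw
    · exact htw.symm
  · exact .of_edge (.intro heS hκe) (by rwa [Function.update_of_ne he₁] at hI)

theorem IsDemand.exists_isPacking (h : IsDemand T S I c) (U : Finset V) (hU : ↑U ⊆ T) :
    ∃ κ k, IsPacking T S I κ k ∧ ∑ t ∈ U, c t ≤ 2 * k := by
  classical
  induction S using Finset.strongInduction generalizing I c with
  | _ S ih =>
  by_cases hex : ∃ e ∈ S, ∃ t ∈ T, ∃ v, v ≠ t ∧ I e = s(v, t)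
  · obtain ⟨e₁, he₁, t, ht, v, hvt, hI₁⟩ := hex
    by_cases hv : v ∈ T
    · obtain ⟨κ, k, hpack, hsum⟩ := ih _ (Finset.erase_ssubset he₁) (h.erase he₁ hv ht hI₁)
      refine ⟨_, k + 1, hpack.of_erase he₁ hv ht hvt hI₁, ?_⟩
      have htwo := sum_crossing_singleton_le_two U (I e₁)
      rw [Finset.sum_sub_distrib] at hsum
      push_cast
      linarith
    · obtain ⟨e₂, he₂, hne, w, hI₂, hw⟩ := h.exists_splittable hv ht he₁ hI₁
      obtain ⟨κ, k, hpack, hsum⟩ := ih _ (Finset.erase_ssubset he₂)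
        (h.split he₁ he₂ hne.symm hI₁ hI₂ hw)
      exact ⟨_, k, hpack.of_split he₂ hne.symm hI₁ hI₂, hsum⟩
  · push Not at hex
    have hc : ∀ t ∈ U, c t ≤ 0 := fun t ht => by
      rw [← cutSize_singleton_eq_zero fun e he v hv => hex e he t (hU ht) v hv]
      exact h.le_cutSize (.inl (isolates_singleton (hU ht)))
    exact ⟨fun _ => 0, 0, fun i hi => (Nat.not_lt_zero i hi).elim,
      by simpa using Finset.sum_nonpos hc⟩

end Packing

variable {G : Grapht V E}

section Path

theorem IsWalk.concat {vs : List V} {es : List E} (h : G.IsWalk vs es) {a b : V} {e : E}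
    (ha : vs.getLast? = some a) (he : G.I e = s(a, b)) : G.IsWalk (vs ++ [b]) (es ++ [e]) := by
  induction h with
  | nil v =>
    obtain rfl : v = a := by simpa using ha
    exact .cons he (.nil b)
  | cons hI _ ih => exact .cons hI (ih (by simpa using ha))

theorem IsWalk.reverse {vs : List V} {es : List E} (h : G.IsWalk vs es) :
    G.IsWalk vs.reverse es.reverse := by
  induction h with
  | nil v => exact .nil v
  | @cons _ _ _ e _ hI _ ih =>
    rw [List.reverse_cons, List.reverse_cons (a := e)]
    exact ih.concat (by simp) (hI.trans Sym2.eq_swap)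

theorem IsWalk.exists_of_append {l l' : List V} (hl' : l' ≠ []) {es : List E}
    (h : G.IsWalk (l ++ l') es) : ∃ es', G.IsWalk l' es' ∧ es' ⊆ es := by
  induction l generalizing es with
  | nil => exact ⟨es, h, List.Subset.refl es⟩
  | cons x l ih =>
    obtain ⟨y, m, hm⟩ := List.exists_cons_of_ne_nil (List.append_ne_nil_of_right_ne_nil l hl')
    rw [List.cons_append, hm] at h
    cases h with
    | cons _ htail =>
      obtain ⟨es', hwalk, hsub⟩ := ih (hm ▸ htail)
      exact ⟨es', hwalk, List.subset_cons_of_subset _ hsub⟩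

theorem IsWalk.exists_mem_edgeCut {X : Set V} {vs : List V} {es : List E} (h : G.IsWalk vs es)
    {a b : V} (ha : vs.head? = some a) (hb : vs.getLast? = some b) (haX : a ∈ X) (hbX : b ∉ X) :
    ∃ e ∈ es, e ∈ G.edgeCut X := by
  induction h generalizing a with
  | nil v => simp_all
  | @cons u w vs e es hI _ ih =>
    obtain rfl : u = a := by simpa using ha
    by_cases hw : w ∈ X
    · obtain ⟨e', he', hcut⟩ := ih rfl (by simpa using hb) hw
      exact ⟨e', List.mem_cons_of_mem _ he', hcut⟩
    · exact ⟨e, List.mem_cons_self, u, w, hI, haX, hw⟩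

namespace Path

/-- The trivial path at `a`. -/
def nil (G : Grapht V E) (a : V) : G.Path where
  first := a
  last := a
  verts := [a]
  edges := []
  isWalk := .nil a
  nodup := List.nodup_singleton a
  head_eq := rfl
  getLast_eq := rfl

/-- The path that starts with the edge `e` from `a` to `P.first` and continues along `P`. -/
def cons (P : G.Path) {e : E} {a : V} (he : G.I e = s(a, P.first)) (ha : a ∉ P.verts) :
    G.Path where
  first := a
  last := P.last
  verts := a :: P.verts
  edges := e :: P.edges
  isWalk := by
    obtain ⟨vs, hvs⟩ := List.head?_eq_some_iff.1 P.head_eq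
    rw [hvs]
    exact .cons he (hvs ▸ P.isWalk)
  nodup := List.nodup_cons.2 ⟨ha, P.nodup⟩
  head_eq := rfl
  getLast_eq := by simp [List.getLast?_cons, P.getLast_eq]

/-- The path `P` traversed from its last vertex to its first. -/
def reverse (P : G.Path) : G.Path where
  first := P.last
  last := P.first
  verts := P.verts.reverse
  edges := P.edges.reverse
  isWalk := P.isWalk.reverse
  nodup := List.nodup_reverse.2 P.nodup
  head_eq := List.head?_reverse.trans P.getLast_eq
  getLast_eq := List.getLast?_reverse.trans P.head_eq

theorem edgeSet_reverse (P : G.Path) : P.reverse.edgeSet = P.edgeSet :=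
  Set.ext fun _ => List.mem_reverse

theorem inner_reverse (P : G.Path) : P.reverse.inner = P.inner.reverse := by
  simp [inner, reverse, List.tail_reverse, List.dropLast_reverse, List.tail_dropLast]

theorem inner_subset (P : G.Path) : P.inner ⊆ P.verts :=
  List.Subset.trans (List.dropLast_subset _) (List.drop_subset 1 _)

theorem first_notMem_inner (P : G.Path) : P.first ∉ P.inner := by
  obtain ⟨vs, hvs⟩ := List.head?_eq_some_iff.1 P.head_eq
  have hnodup := P.nodup
  rw [hvs] at hnodup
  rw [inner, hvs]
  exact fun h => (List.nodup_cons.1 hnodup).1 (List.mem_of_mem_dropLast h)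

theorem last_notMem_inner (P : G.Path) : P.last ∉ P.inner := by
  have h := P.reverse.first_notMem_inner
  rwa [inner_reverse, List.mem_reverse] at h

theorem exists_mem_edgeCut (P : G.Path) {X : Set V} (hfirst : P.first ∈ X) (hlast : P.last ∉ X) :
    ∃ e ∈ P.edgeSet, e ∈ G.edgeCut X :=
  P.isWalk.exists_mem_edgeCut P.head_eq P.getLast_eq hfirst hlast

theorem edgeSet_nonempty (P : G.Path) (h : P.first ≠ P.last) : P.edgeSet.Nonempty :=
  let ⟨e, he, _⟩ := P.exists_mem_edgeCut (X := {P.first}) rfl h.symm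
  ⟨e, he⟩

theorem exists_suffix (P : G.Path) {a : V} (ha : a ∈ P.verts) :
    ∃ Q : G.Path, Q.first = a ∧ Q.last = P.last ∧ Q.edgeSet ⊆ P.edgeSet ∧ Q.verts ⊆ P.verts := by
  obtain ⟨l, l', hl⟩ := List.append_of_mem ha
  obtain ⟨es, hwalk, hes⟩ := IsWalk.exists_of_append (List.cons_ne_nil a l') (hl ▸ P.isWalk)
  have hlast := P.getLast_eq
  rw [hl, List.getLast?_append_of_ne_nil _ (List.cons_ne_nil a l')] at hlast
  exact ⟨⟨a, P.last, a :: l', es, hwalk, (hl ▸ P.nodup).of_append_right, rfl, hlast⟩, rfl, rfl,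
    hes, fun x hx => by rw [hl]; exact List.mem_append_right l hx⟩

end Path

theorem exists_path_of_joined {F : Set E} {A : Set V} {a b : V} (h : Joined G.I F a b)
    (hb : b ∈ A) :
    ∃ P : G.Path, P.first = a ∧ P.last ∈ A ∧ P.edgeSet ⊆ F ∧ ∀ x ∈ P.verts, x ∈ A → x = P.last := by
  have of_mem : ∀ {x}, x ∈ A → ∃ P : G.Path, P.first = x ∧ P.last ∈ A ∧ P.edgeSet ⊆ F ∧
      ∀ y ∈ P.verts, y ∈ A → y = P.last := fun {x} hx =>
    ⟨.nil G x, rfl, hx, by simp [Path.nil, Path.edgeSet], by simp [Path.nil]⟩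
  induction h using Relation.ReflTransGen.head_induction_on with
  | refl => exact of_mem hb
  | @head a _ hstep _ ih =>
    by_cases haA : a ∈ A
    · exact of_mem haA
    obtain ⟨P, rfl, hlast, hF, hA⟩ := ih
    obtain ⟨e, he, hI⟩ := hstep
    by_cases haP : a ∈ P.verts
    · obtain ⟨Q, hQa, hQlast, hQF, hQP⟩ := P.exists_suffix haP
      exact ⟨Q, hQa, hQlast ▸ hlast, hQF.trans hF, fun x hx => hQlast ▸ hA x (hQP hx)⟩
    · refine ⟨P.cons hI haP, rfl, hlast, ?_, ?_⟩
      · rintro x hx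
        rcases List.mem_cons.1 hx with rfl | hx
        exacts [he, hF hx]
      · intro x hx hxA
        rcases List.mem_cons.1 hx with rfl | hx
        exacts [(haA hxA).elim, hA x hx hxA]

theorem exists_isTPath_of_joined {F : Set E} {s t : V} (hs : s ∈ G.T) (ht : t ∈ G.T) (hst : s ≠ t)
    (h : Joined G.I F s t) : ∃ P : G.Path, G.IsTPath P ∧ P.edgeSet ⊆ F := by
  obtain ⟨P, rfl, hlast, hF, hA⟩ := exists_path_of_joined (A := G.T \ {s}) h ⟨ht, hst.symm⟩
  refine ⟨P, ⟨hs, hlast.1, fun h => hlast.2 h.symm, fun x hx hxT => ?_⟩, hF⟩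
  have hxfirst : x ≠ P.first := fun h => P.first_notMem_inner (h ▸ hx)
  exact P.last_notMem_inner (hA x (P.inner_subset hx) ⟨hxT, hxfirst⟩ ▸ hx)

end Path

section PathSystem

theorem EdgeDisjoint.finite_and_ncard_le {Ps : Set G.Path} (h : G.EdgeDisjoint Ps) {C : Set E}
    (hC : C.Finite) (hPs : ∀ P ∈ Ps, ∃ e ∈ P.edgeSet, e ∈ C) : Ps.Finite ∧ Ps.ncard ≤ C.ncard := by
  choose f hf hfC using fun P : Ps => hPs P P.2
  have hinj : Function.Injective fun P => (⟨f P, hfC P⟩ : C) := fun P Q hPQ => by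
    by_contra hne
    have hPQ : f P = f Q := congrArg Subtype.val hPQ
    exact h P.2 Q.2 (Subtype.coe_ne_coe.2 hne) _ (hf P) (hPQ ▸ hf Q)
  have := hC.to_subtype
  exact ⟨Finite.of_injective _ hinj, Nat.card_le_card_of_injective _ hinj⟩

theorem lambda_le_ncard_edgeCut {A B X : Set V} (hX : (G.edgeCut X).Finite) (hA : A ⊆ X)
    (hB : Disjoint B X) : G.lambda A B ≤ (G.edgeCut X).ncard := by
  refine csSup_le' ?_
  rintro _ ⟨Ps, hdisj, hpath, -, rfl⟩
  exact (hdisj.finite_and_ncard_le hX fun P hP => P.exists_mem_edgeCut (hA (hpath P hP).1)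
    (Set.disjoint_left.1 hB (hpath P hP).2.1)).2

variable [Finite E]

theorem EdgeDisjoint.finite_and_ncard_le_natCard {Ps : Set G.Path} (h : G.EdgeDisjoint Ps)
    (hne : ∀ P ∈ Ps, P.first ≠ P.last) : Ps.Finite ∧ Ps.ncard ≤ Nat.card E := by
  rw [← Set.ncard_univ]
  exact h.finite_and_ncard_le Set.finite_univ fun P hP =>
    let ⟨e, he⟩ := P.edgeSet_nonempty (hne P hP)
    ⟨e, he, Set.mem_univ e⟩

theorem EdgeDisjoint.ncard_le_lambda {A B : Set V} (hAB : Disjoint A B) {Ps : Set G.Path}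
    (h : G.EdgeDisjoint Ps) (hPs : ∀ P ∈ Ps, G.IsABPath A B P) : Ps.ncard ≤ G.lambda A B := by
  have hbound {Qs : Set G.Path} (hQs : G.EdgeDisjoint Qs) (hpath : ∀ P ∈ Qs, G.IsABPath A B P) :
      Qs.Finite ∧ Qs.ncard ≤ Nat.card E :=
    hQs.finite_and_ncard_le_natCard fun P hP => hAB.ne_of_mem (hpath P hP).1 (hpath P hP).2.1
  refine le_csSup ⟨Nat.card E, ?_⟩ ⟨Ps, h, hPs, (hbound h hPs).1, rfl⟩
  rintro _ ⟨Qs, hQs, hpath, -, rfl⟩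
  exact (hbound hQs hpath).2

theorem IsTPathSystem.finite {Ps : Set G.Path} (h : G.IsTPathSystem Ps) : Ps.Finite :=
  (h.1.finite_and_ncard_le_natCard fun P hP => (h.2 P hP).2.2.1).1

end PathSystem

variable {Ps : Set G.Path} {t : V}

section Family

variable {ι : Type*} {p : ι → G.Path}

theorem edgeDisjoint_range (h : Pairwise fun i j => Disjoint (p i).edgeSet (p j).edgeSet) :
    G.EdgeDisjoint (Set.range p) := by
  rintro _ ⟨i, rfl⟩ _ ⟨j, rfl⟩ hne _ hi hj
  exact Set.disjoint_left.1 (h fun hij => hne (congrArg p hij)) hi hj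

theorem ncard_range_of_pairwise_disjoint_edgeSet
    (h : Pairwise fun i j => Disjoint (p i).edgeSet (p j).edgeSet)
    (hne : ∀ i, (p i).first ≠ (p i).last) : (Set.range p).ncard = Nat.card ι := by
  refine Set.ncard_range_of_injective fun i j hij => ?_
  by_contra hij'
  obtain ⟨e, he⟩ := (p i).edgeSet_nonempty (hne i)
  exact Set.disjoint_left.1 (h hij') he (hij ▸ he)

end Family

section UpperBound

theorem IsTPath.isABPath {P : G.Path} (h : G.IsTPath P) :
    G.IsABPath {P.first} (G.T \ {P.first}) P :=
  ⟨rfl, ⟨h.2.1, h.2.2.1.symm⟩, fun v hv hvT =>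
    h.2.2.2 v hv (hvT.elim (fun hv => hv ▸ h.1) fun hv => hv.1)⟩

theorem IsTPath.reverse {P : G.Path} (h : G.IsTPath P) : G.IsTPath P.reverse :=
  ⟨h.2.1, h.1, h.2.2.1.symm, fun v hv =>
    h.2.2.2 v (by rwa [Path.inner_reverse, List.mem_reverse] at hv)⟩

theorem IsTPath.exists_isABPath {P : G.Path} (h : G.IsTPath P) (ht : t = P.first ∨ t = P.last) :
    ∃ Q : G.Path, G.IsABPath {t} (G.T \ {t}) Q ∧ Q.edgeSet = P.edgeSet := by
  rcases ht with rfl | rfl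
  · exact ⟨P, h.isABPath, rfl⟩
  · exact ⟨P.reverse, h.reverse.isABPath, P.edgeSet_reverse⟩

variable [Finite E]

theorem IsTPathSystem.ncard_le_lambda (h : G.IsTPathSystem Ps) (t : V) :
    {P ∈ Ps | t = P.first ∨ t = P.last}.ncard ≤ G.lambda {t} (G.T \ {t}) := by
  choose q hq hqE using fun P : {P ∈ Ps | t = P.first ∨ t = P.last} =>
    (h.2 P P.2.1).exists_isABPath P.2.2
  have hdisj : Pairwise fun P Q => Disjoint (q P).edgeSet (q Q).edgeSet := fun P Q hne => by
    simp only [hqE, Set.disjoint_left]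
    exact h.1 P.2.1 Q.2.1 (Subtype.coe_ne_coe.2 hne)
  have hAB : Disjoint {t} (G.T \ {t}) := Set.disjoint_sdiff_right
  rw [← Nat.card_coe_set_eq, ← ncard_range_of_pairwise_disjoint_edgeSet hdisj fun P =>
    hAB.ne_of_mem (hq P).1 (hq P).2.1]
  exact (edgeDisjoint_range hdisj).ncard_le_lambda hAB (Set.forall_mem_range.2 hq)

theorem IsTPathSystem.two_mul_ncard_le (h : G.IsTPathSystem Ps) (hT : G.T.Finite) :
    2 * Ps.ncard ≤ ∑ t ∈ hT.toFinset, G.lambda {t} (G.T \ {t}) := by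
  classical
  obtain ⟨F, rfl⟩ := h.finite.exists_finset_coe
  have hends : ∀ P ∈ F, {t ∈ hT.toFinset | t = P.first ∨ t = P.last}.card = 2 := fun P hP => by
    obtain ⟨hfirst, hlast, hne, -⟩ := h.2 P hP
    rw [← Finset.card_pair hne]
    congr 1
    grind [Set.Finite.mem_toFinset]
  calc 2 * (F : Set G.Path).ncard
      = ∑ P ∈ F, {t ∈ hT.toFinset | t = P.first ∨ t = P.last}.card := by
        rw [Set.ncard_coe_finset, Finset.sum_congr rfl hends, Finset.sum_const, smul_eq_mul,
          mul_comm]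
    _ = ∑ t ∈ hT.toFinset, {P ∈ F | t = P.first ∨ t = P.last}.card :=
        Finset.sum_card_bipartiteAbove_eq_sum_card_bipartiteBelow
          fun (P : G.Path) t => t = P.first ∨ t = P.last
    _ ≤ ∑ t ∈ hT.toFinset, G.lambda {t} (G.T \ {t}) := Finset.sum_le_sum fun t _ => by
        rw [← Set.ncard_coe_finset, Finset.coe_filter]
        exact h.ncard_le_lambda t

end UpperBound

section LowerBound

/-- The least size of a cut separating the terminal `t` from the other terminals. -/
noncomputable def minCut (G : Grapht V E) (t : V) : ℕ :=
  sInf ((fun X => (G.edgeCut X).ncard) '' {X | Isolates G.T t X})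

theorem exists_isolates_ncard_edgeCut_eq_minCut (ht : t ∈ G.T) :
    ∃ X, Isolates G.T t X ∧ (G.edgeCut X).ncard = G.minCut t :=
  Nat.sInf_mem (Set.Nonempty.image _ ⟨{t}, isolates_singleton ht⟩)

theorem minCut_le_ncard_edgeCut {X : Set V} (hX : Isolates G.T t X) :
    G.minCut t ≤ (G.edgeCut X).ncard :=
  Nat.sInf_le ⟨X, hX, rfl⟩

theorem IsPacking.exists_isTPathSystem {S : Finset E} {κ : E → ℕ} {k : ℕ}
    (h : IsPacking G.T S G.I κ k) : ∃ Ps, G.IsTPathSystem Ps ∧ Ps.ncard = k := by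
  have hpath : ∀ i : Fin k, ∃ P : G.Path, G.IsTPath P ∧ P.edgeSet ⊆ {e | e ∈ S ∧ κ e = i} :=
    fun i =>
      let ⟨_, hs, _, ht, hst, hjoin⟩ := h i i.2
      exists_isTPath_of_joined hs ht hst hjoin
  choose p hp hpκ using hpath
  have hdisj : Pairwise fun i j => Disjoint (p i).edgeSet (p j).edgeSet := fun i j hij =>
    Set.disjoint_left.2 fun e hi hj => hij (Fin.ext ((hpκ i hi).2.symm.trans (hpκ j hj).2))
  refine ⟨Set.range p, ⟨edgeDisjoint_range hdisj, Set.forall_mem_range.2 hp⟩, ?_⟩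
  rw [ncard_range_of_pairwise_disjoint_edgeSet hdisj fun i => (hp i).2.2.1, Nat.card_fin]

theorem lambda_le_minCut [Finite E] (ht : t ∈ G.T) :
    G.lambda {t} (G.T \ {t}) ≤ G.minCut t := by
  obtain ⟨X, hX, hcut⟩ := exists_isolates_ncard_edgeCut_eq_minCut ht
  rw [← hcut]
  refine lambda_le_ncard_edgeCut (Set.toFinite _) ?_ ?_
  · exact Set.singleton_subset_iff.2 ((hX.2 t ht).2 rfl)
  · exact Set.disjoint_left.2 fun r hr hrX => hr.2 ((hX.2 r hr.1).1 hrX)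

theorem InnerEulerian.even_cutSize [Fintype E] (hG : G.InnerEulerian) {X : Set V}
    (hX : Disjoint X G.T) : Even (cutSize Finset.univ G.I X) := by
  rw [cutSize_univ_eq_ncard_edgeCut, Int.even_coe_nat, ← Nat.not_odd_iff_even]
  exact fun hodd => hG X hX ⟨Set.toFinite _, hodd⟩

/-- Two sets isolating the same terminal differ by a set of inner vertices, so their cuts have the
same parity. -/
theorem InnerEulerian.isDemand_minCut [Fintype E] (hG : G.InnerEulerian) :
    IsDemand G.T Finset.univ G.I fun t => (G.minCut t : ℤ) where
  le_cutSize hX := by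
    obtain ⟨Y, hY, hcut⟩ := hX.exists_isolates
    rw [← hcut, cutSize_univ_eq_ncard_edgeCut]
    exact_mod_cast minCut_le_ncard_edgeCut hY
  even_sub hX := by
    obtain ⟨Y, hY, hcut⟩ := hX.exists_isolates
    obtain ⟨M, hM, hmin⟩ := exists_isolates_ncard_edgeCut_eq_minCut hY.1
    have hdiff : Disjoint (symmDiff Y M) G.T :=
      Set.disjoint_left.2 fun r hr hrT => by grind [Isolates]
    have hsum := even_cutSize_add_cutSize_add_cutSize_symmDiff Finset.univ G.I Y M
    rw [Int.even_add, iff_true_right (hG.even_cutSize hdiff)] at hsum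
    rwa [← hmin, ← cutSize_univ_eq_ncard_edgeCut, ← hcut, Int.even_sub, ← Int.even_add]
  even_degree hv := hG.even_cutSize (Set.disjoint_singleton_left.2 hv)

theorem InnerEulerian.exists_isTPathSystem [Finite E] (hG : G.InnerEulerian) (hT : G.T.Finite) :
    ∃ Ps, G.IsTPathSystem Ps ∧ ∑ t ∈ hT.toFinset, G.lambda {t} (G.T \ {t}) ≤ 2 * Ps.ncard := by
  have := Fintype.ofFinite E
  obtain ⟨κ, k, hpack, hsum⟩ := hG.isDemand_minCut.exists_isPacking hT.toFinset hT.coe_toFinset.le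
  obtain ⟨Ps, hPs, rfl⟩ := hpack.exists_isTPathSystem
  refine ⟨Ps, hPs, le_trans (Finset.sum_le_sum fun t ht => ?_) (by exact_mod_cast hsum)⟩
  exact lambda_le_minCut (hT.mem_toFinset.1 ht)

end LowerBound

end Grapht

theorem lovasz_cherkassky_finite_general {V : Type u} {E : Type v} [Finite E] (G : Grapht V E)
    (hG : G.InnerEulerian) (hT : G.T.Finite) :
    2 * sSup {n : ℕ | ∃ Ps : Set G.Path, G.IsTPathSystem Ps ∧ Ps.Finite ∧ Ps.ncard = n} =
      ∑ t ∈ hT.toFinset, G.lambda {t} (G.T \ {t}) := by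
  obtain ⟨Ps, hPs, hsum⟩ := hG.exists_isTPathSystem hT
  have hgreatest : IsGreatest
      {n : ℕ | ∃ Ps : Set G.Path, G.IsTPathSystem Ps ∧ Ps.Finite ∧ Ps.ncard = n} Ps.ncard := by
    refine ⟨⟨Ps, hPs, hPs.finite, rfl⟩, ?_⟩
    rintro _ ⟨Qs, hQs, -, rfl⟩
    exact Nat.le_of_mul_le_mul_left ((hQs.two_mul_ncard_le hT).trans hsum) two_pos
  rw [hgreatest.csSup_eq]
  exact le_antisymm (hPs.two_mul_ncard_le hT) hsum

/-- **Lovász–Cherkassky theorem (finite case).** In a finite inner Eulerian grapht the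
maximal number of pairwise edge-disjoint `T`-paths equals `(1/2) · Σ_{t∈T} λ_G(t, T−t)`. -/
theorem lovasz_cherkassky_finite {V : Type u} {E : Type v} [Finite V] [Finite E]
    (G : Grapht V E) (hG : G.InnerEulerian) :
    2 * sSup {n : ℕ | ∃ Ps : Set G.Path, G.IsTPathSystem Ps ∧ Ps.Finite ∧ Ps.ncard = n} =
      ∑ t ∈ (Set.toFinite G.T).toFinset, G.lambda {t} (G.T \ {t}) :=
  lovasz_cherkassky_finite_general G hG (Set.toFinite G.T)
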